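/- arXiv:1210.4673 — 2 statements merged into one kernel-verified Lean document; each statement's English description precedes it below -/
import Mathlib

section
/- Let $f_{rel} > 0$, $S > 0$, $D > 0$ with $D f_{rel} > S$, let $c$ be the unique positive root of $7t^3 + 21t^2 - 3t - 1 = 0$, and define $E_1(X) = (S - X) f_{rel}^2 + 2X \left( \frac{2X}{D f_{rel} - S + X} f_{rel} \right)^2$ for $X \geq 0$. Then $E_1$ is monotonically non-increasing on the interval $[0, \; c(D f_{rel} - S)]$ and monotonically non-decreasing on the interval $[c(D f_{rel} - S), \; \infty)$. -/
/-!
Let `d = D f_rel - S` be the slack left by a single execution of every task at speed `f_rel`.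
Measuring the re-executed weight in units of `d`, `X = t d`, turns the energy into
`f_rel ^ 2 (S + d φ(t))` with `φ(t) = 8 t ^ 3 / (1 + t) ^ 2 - t`, and
`φ'(t) = (7 t ^ 3 + 21 t ^ 2 - 3 t - 1) / (1 + t) ^ 3`. The quotient of the cubic by `t` is
increasing on `(0, ∞)`, so the cubic changes sign exactly once there, at its root `c`.
-/

section EnergyCubic

/-- The cubic whose positive root is the optimal re-executed weight in units of the slack; it is
the numerator of the derivative of `normalizedEnergy`. -/
def energyCubic (t : ℝ) : ℝ := 7 * t ^ 3 + 21 * t ^ 2 - 3 * t - 1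

variable {c t : ℝ}

lemma mul_energyCubic_of_root (hc : energyCubic c = 0) (t : ℝ) :
    c * energyCubic t = (t - c) * (7 * (c * t) * (c + t) + 21 * (c * t) + 1) := by
  unfold energyCubic at *
  linear_combination t * hc

lemma energyCubic_neg_of_lt_root (hc : energyCubic c = 0) (ht : 0 ≤ t) (htc : t < c) :
    energyCubic t < 0 := by
  have hc₀ : 0 < c := ht.trans_lt htc
  refine neg_of_mul_neg_right ?_ hc₀.le
  rw [mul_energyCubic_of_root hc]
  exact mul_neg_of_neg_of_pos (sub_neg.2 htc) (by positivity)

lemma energyCubic_pos_of_root_lt (hc₀ : 0 < c) (hc : energyCubic c = 0) (hct : c < t) :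
    0 < energyCubic t := by
  have ht₀ : 0 < t := hc₀.trans hct
  refine pos_of_mul_pos_right ?_ hc₀.le
  rw [mul_energyCubic_of_root hc]
  exact mul_pos (sub_pos.2 hct) (by positivity)

end EnergyCubic

section NormalizedEnergy

/-- The part of the energy that depends on the re-executed weight, for unit slack and unit
reliability speed: `t` is the weight in units of the slack. -/
noncomputable def normalizedEnergy (t : ℝ) : ℝ := 2 * t * (2 * t / (1 + t)) ^ 2 - t

variable {c t : ℝ}

lemma hasDerivAt_normalizedEnergy (ht : 1 + t ≠ 0) :
    HasDerivAt normalizedEnergy (energyCubic t / (1 + t) ^ 3) t := by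
  have hlin : HasDerivAt (fun s : ℝ => 2 * s) 2 t := by
    simpa using (hasDerivAt_id t).const_mul 2
  have hden : HasDerivAt (fun s : ℝ => 1 + s) 1 t := (hasDerivAt_id t).const_add 1
  refine ((hlin.mul ((hlin.div hden ht).pow 2)).sub (hasDerivAt_id t)).congr_deriv ?_
  simp only [energyCubic, Pi.div_apply, Pi.pow_apply, Nat.cast_ofNat, Nat.add_one_sub_one,
    pow_one]
  field_simp
  ring

lemma continuousOn_normalizedEnergy : ContinuousOn normalizedEnergy {t | 1 + t ≠ 0} :=
  HasDerivAt.continuousOn fun _ => hasDerivAt_normalizedEnergy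

lemma strictAntiOn_normalizedEnergy (hc : energyCubic c = 0) :
    StrictAntiOn normalizedEnergy (Set.Icc 0 c) := by
  refine strictAntiOn_of_deriv_neg (convex_Icc 0 c)
    (continuousOn_normalizedEnergy.mono fun t ht =>
      (add_pos_of_pos_of_nonneg one_pos ht.1).ne') fun t ht => ?_
  rw [interior_Icc] at ht
  have hden : 0 < 1 + t := add_pos one_pos ht.1
  rw [(hasDerivAt_normalizedEnergy hden.ne').deriv]
  exact div_neg_of_neg_of_pos (energyCubic_neg_of_lt_root hc ht.1.le ht.2) (by positivity)

lemma strictMonoOn_normalizedEnergy (hc₀ : 0 < c) (hc : energyCubic c = 0) :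
    StrictMonoOn normalizedEnergy (Set.Ici c) := by
  refine strictMonoOn_of_deriv_pos (convex_Ici c)
    (continuousOn_normalizedEnergy.mono fun t ht =>
      (add_pos one_pos (hc₀.trans_le ht)).ne') fun t ht => ?_
  rw [interior_Ici] at ht
  have hden : 0 < 1 + t := add_pos one_pos (hc₀.trans ht)
  rw [(hasDerivAt_normalizedEnergy hden.ne').deriv]
  exact div_pos (energyCubic_pos_of_root_lt hc₀ hc ht) (by positivity)

end NormalizedEnergy

section ChainEnergy

/-- The energy `E₁(X)` of a linear chain of total weight `S` with deadline `D` and reliability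
speed `f`, when tasks of total weight `X` are re-executed. A task of weight `w` run at speed `v`
costs `w * v ^ 2`; the re-executed tasks run twice, at the common speed that exhausts the time
left by the others. Meaningful for `S < D * f` and `0 ≤ X`, where the denominator is positive. -/
noncomputable def chainEnergy (f S D X : ℝ) : ℝ :=
  (S - X) * f ^ 2 + 2 * X * (2 * X / (D * f - S + X) * f) ^ 2

variable {f S D c : ℝ}

lemma chainEnergy_eq_normalizedEnergy (hd : D * f - S ≠ 0) (X : ℝ) :
    chainEnergy f S D X =
      f ^ 2 * (S + (D * f - S) * normalizedEnergy (X / (D * f - S))) := by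
  unfold chainEnergy normalizedEnergy
  generalize D * f - S = d at hd ⊢
  obtain ⟨t, rfl⟩ : ∃ t, X = d * t := ⟨X / d, (mul_div_cancel₀ X hd).symm⟩
  have hspeed : 2 * (d * t) / (d + d * t) = 2 * t / (1 + t) := by
    rw [mul_left_comm, ← mul_one_add, mul_div_mul_left _ _ hd]
  rw [hspeed, mul_div_cancel_left₀ t hd]
  ring

lemma chainEnergy_lt_chainEnergy_iff (hf : f ≠ 0) (hd : 0 < D * f - S) {X Y : ℝ} :
    chainEnergy f S D X < chainEnergy f S D Y ↔
      normalizedEnergy (X / (D * f - S)) < normalizedEnergy (Y / (D * f - S)) := by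
  rw [chainEnergy_eq_normalizedEnergy hd.ne', chainEnergy_eq_normalizedEnergy hd.ne',
    mul_lt_mul_iff_right₀ (by positivity), add_lt_add_iff_left, mul_lt_mul_iff_right₀ hd]

lemma strictAntiOn_chainEnergy (hf : f ≠ 0) (hd : 0 < D * f - S) (hc : energyCubic c = 0) :
    StrictAntiOn (chainEnergy f S D) (Set.Icc 0 (c * (D * f - S))) := by
  have hscale {X : ℝ} (hX : X ∈ Set.Icc 0 (c * (D * f - S))) :
      X / (D * f - S) ∈ Set.Icc 0 c :=
    ⟨div_nonneg hX.1 hd.le, (div_le_iff₀ hd).2 hX.2⟩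
  exact fun X hX Y hY hXY => (chainEnergy_lt_chainEnergy_iff hf hd).2 <|
    strictAntiOn_normalizedEnergy hc (hscale hX) (hscale hY) (div_lt_div_of_pos_right hXY hd)

lemma strictMonoOn_chainEnergy (hf : f ≠ 0) (hd : 0 < D * f - S) (hc₀ : 0 < c)
    (hc : energyCubic c = 0) :
    StrictMonoOn (chainEnergy f S D) (Set.Ici (c * (D * f - S))) := by
  have hscale {X : ℝ} (hX : X ∈ Set.Ici (c * (D * f - S))) : X / (D * f - S) ∈ Set.Ici c :=
    (le_div_iff₀ hd).2 hX
  exact fun X hX Y hY hXY => (chainEnergy_lt_chainEnergy_iff hf hd).2 <|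
    strictMonoOn_normalizedEnergy hc₀ hc (hscale hX) (hscale hY)
      (div_lt_div_of_pos_right hXY hd)

end ChainEnergy

/-- `E1` is non-increasing on `[0, c(D f_rel - S)]` and non-decreasing on
`[c(D f_rel - S), ∞)`, where `c` is the unique positive root of
`7t³+21t²-3t-1`. -/
theorem E1_unimodal
    (frel S D c : ℝ) (hfrel : 0 < frel) (hS : 0 < S) (hD : 0 < D)
    (hDS : S < D * frel)
    (hc : 0 < c) (hcroot : 7 * c ^ 3 + 21 * c ^ 2 - 3 * c - 1 = 0)
    (hcuniq : ∀ t : ℝ, 0 < t → 7 * t ^ 3 + 21 * t ^ 2 - 3 * t - 1 = 0 → t = c)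
    (E1 : ℝ → ℝ)
    (hE1 : ∀ X, E1 X =
      (S - X) * frel ^ 2 + 2 * X * (2 * X / (D * frel - S + X) * frel) ^ 2) :
    (∀ X1 X2 : ℝ, 0 ≤ X1 → X1 ≤ X2 → X2 ≤ c * (D * frel - S) → E1 X2 ≤ E1 X1) ∧
    (∀ X1 X2 : ℝ, c * (D * frel - S) ≤ X1 → X1 ≤ X2 → E1 X1 ≤ E1 X2) := by
  obtain rfl : E1 = chainEnergy frel S D := funext hE1
  have hd : 0 < D * frel - S := sub_pos.2 hDS
  constructor
  · intro X1 X2 hX1 hX hX2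
    exact (strictAntiOn_chainEnergy hfrel.ne' hd hcroot).antitoneOn
      ⟨hX1, hX.trans hX2⟩ ⟨hX1.trans hX, hX2⟩ hX
  · intro X1 X2 hX1 hX
    exact (strictMonoOn_chainEnergy hfrel.ne' hd hc hcroot).monotoneOn
      hX1 (hX1.trans hX) hX
end

section
/- Let $f_{rel} > 0$, $S > 0$, $D > 0$ with $D f_{rel} > S$, and define $E_2(X) = (S - X) f_{rel}^2 + \frac{2X^3}{(D f_{rel} - S + X)^2} f_{rel}^2$ for $X \geq 0$. Let $0 < \varepsilon' < 1$ and let $X_a, X_o$ satisfy $0 \leq X_a \leq X_o \leq S$, $X_o \leq (1 + \varepsilon') X_a$, and suppose additionally that $S f_{rel}^2 \leq 25\, E_2(X_o)$. Then $E_2(X_a) \leq (1 + 28 \varepsilon')\, E_2(X_o)$. -/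
/-!
Only the linear term of `E₂` decreases: the replication term `2 X³ / (D f_rel - S + X)²` equals
`2 X (X / (D f_rel - S + X))²`, a product of increasing factors. Hence passing from `Xo` to `Xa`
costs at most `(Xo - Xa) f_rel² ≤ ε' Xa f_rel² ≤ ε' S f_rel²`, and the last quantity is controlled
by `ε' E₂(Xo)`.
-/

section OrderedField

variable {𝕜 : Type*} [Field 𝕜] [LinearOrder 𝕜] [IsStrictOrderedRing 𝕜]

theorem monotoneOn_div_const_add {c : 𝕜} (hc : 0 < c) :
    MonotoneOn (fun x ↦ x / (c + x)) (Set.Ici 0) := by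
  intro x hx y hy hxy
  rw [Set.mem_Ici] at hx hy
  change x / (c + x) ≤ y / (c + y)
  rw [div_le_div_iff₀ (by positivity) (by positivity)]
  linarith [mul_le_mul_of_nonneg_left hxy hc.le]

theorem monotoneOn_pow_div_const_add_pow {c : 𝕜} (hc : 0 < c) {m n : ℕ} (hnm : n ≤ m) :
    MonotoneOn (fun x ↦ x ^ m / (c + x) ^ n) (Set.Ici 0) := by
  have factor (x : 𝕜) : x ^ m / (c + x) ^ n = x ^ (m - n) * (x / (c + x)) ^ n := by
    rw [div_pow, ← mul_div_assoc, pow_sub_mul_pow x hnm]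
  intro x hx y hy hxy
  have ratio_le : x / (c + x) ≤ y / (c + y) := monotoneOn_div_const_add hc hx hy hxy
  rw [Set.mem_Ici] at hx hy
  simp only [factor]
  gcongr

/-- The energy `E₂(X)` of a linear chain of total weight `S` with deadline `D` and reliability
speed `frel`, when tasks of total weight `X` are replicated. The other tasks run once at speed
`frel`; each of the two replicas runs at the speed `X / (D - (S - X) / frel)` that fills the
remaining time, which gives the second term once the inner fraction is cleared. -/
def replicationEnergy (frel S D X : 𝕜) : 𝕜 :=
  (S - X) * frel ^ 2 + 2 * X ^ 3 / (D * frel - S + X) ^ 2 * frel ^ 2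

theorem replicationEnergy_le_add {frel S D X Y : 𝕜} (hDS : S < D * frel)
    (hX : 0 ≤ X) (hXY : X ≤ Y) :
    replicationEnergy frel S D X ≤ replicationEnergy frel S D Y + (Y - X) * frel ^ 2 := by
  have cube_term_le : X ^ 3 / (D * frel - S + X) ^ 2 ≤ Y ^ 3 / (D * frel - S + Y) ^ 2 :=
    monotoneOn_pow_div_const_add_pow (sub_pos.2 hDS) (by norm_num) hX (hX.trans hXY) hXY
  calc replicationEnergy frel S D X
      = (S - X) * frel ^ 2 + 2 * (X ^ 3 / (D * frel - S + X) ^ 2) * frel ^ 2 := by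
        rw [replicationEnergy, mul_div_assoc]
    _ ≤ (S - X) * frel ^ 2 + 2 * (Y ^ 3 / (D * frel - S + Y) ^ 2) * frel ^ 2 := by gcongr
    _ = replicationEnergy frel S D Y + (Y - X) * frel ^ 2 := by
        rw [replicationEnergy, mul_div_assoc]; ring

theorem fptas_approx_ratio_general {frel S D K ε' Xa Xo : 𝕜} (hDS : S < D * frel)
    (hε : 0 ≤ ε') (hXa : 0 ≤ Xa) (hle : Xa ≤ Xo) (hXaS : Xa ≤ S) (happrox : Xo ≤ (1 + ε') * Xa)
    (hbound : S * frel ^ 2 ≤ K * replicationEnergy frel S D Xo) :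
    replicationEnergy frel S D Xa ≤ (1 + K * ε') * replicationEnergy frel S D Xo := by
  have gap_le : Xo - Xa ≤ ε' * S :=
    calc Xo - Xa ≤ ε' * Xa := by linarith
      _ ≤ ε' * S := by gcongr
  calc replicationEnergy frel S D Xa
      ≤ replicationEnergy frel S D Xo + (Xo - Xa) * frel ^ 2 :=
        replicationEnergy_le_add hDS hXa hle
    _ ≤ replicationEnergy frel S D Xo + ε' * S * frel ^ 2 := by gcongr
    _ = replicationEnergy frel S D Xo + ε' * (S * frel ^ 2) := by rw [mul_assoc]
    _ ≤ replicationEnergy frel S D Xo + ε' * (K * replicationEnergy frel S D Xo) := by gcongr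
    _ = (1 + K * ε') * replicationEnergy frel S D Xo := by ring

end OrderedField

/-- Approximation ratio of the FPTAS: if additionally `S f_rel² ≤ 25 E2(Xo)`,
then `E2(Xa) ≤ (1 + 28ε') E2(Xo)`. -/
theorem fptas_approx_ratio
    (frel S D : ℝ) (hfrel : 0 < frel) (hS : 0 < S) (hD : 0 < D)
    (hDS : S < D * frel)
    (E2 : ℝ → ℝ)
    (hE2 : ∀ X, E2 X =
      (S - X) * frel ^ 2 + 2 * X ^ 3 / (D * frel - S + X) ^ 2 * frel ^ 2)
    (ε' Xa Xo : ℝ) (hε0 : 0 < ε') (hε1 : ε' < 1)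
    (h0 : 0 ≤ Xa) (h1 : Xa ≤ Xo) (h2 : Xo ≤ S) (h3 : Xo ≤ (1 + ε') * Xa)
    (hbound : S * frel ^ 2 ≤ 25 * E2 Xo) :
    E2 Xa ≤ (1 + 28 * ε') * E2 Xo := by
  obtain rfl : E2 = replicationEnergy frel S D := funext hE2
  exact fptas_approx_ratio_general hDS hε0.le h0 h1 (h1.trans h2) h3
    (by linarith [mul_pos hS (pow_pos hfrel 2)])
end
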